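/- Let V be a real vector space, K ⊆ V a convex set, f : K → ℝ ∪ {+∞} a generalized affine map, and α ∈ ℝ. Let C be either the sublevel set K_f^≤ = {x ∈ K : f(x) ≤ α} or the level set K_f^= = {x ∈ K : f(x) = α}, and let x ∈ C. If the face F_C(x) of C generated by x has finite dimension m ∈ ℕ, then the face F_K(x) of K generated by x has dimension m or m + 1. -/

import Mathlib

variable {V : Type*} [AddCommGroup V] [Module ℝ V]

/-- `E` is an extreme subset of `K`: whenever a point of `E` is written as
`(1-l)•y + l•z` with `y, z ∈ K` and `l ∈ (0,1)`, both `y` and `z` lie in `E`. -/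
def IsExtremeSubset (K E : Set V) : Prop :=
  E ⊆ K ∧ ∀ x ∈ E, ∀ y ∈ K, ∀ z ∈ K, ∀ l : ℝ, l ∈ Set.Ioo (0:ℝ) 1 →
    x = (1 - l) • y + l • z → y ∈ E ∧ z ∈ E

/-- `F` is a face of `K`: a convex extreme subset of `K`. -/
def IsFaceOf (K F : Set V) : Prop := Convex ℝ F ∧ IsExtremeSubset K F

/-- The face of `K` generated by `x`: the smallest face of `K` containing `x`
(the intersection of all faces of `K` containing `x`). -/
def genFace (K : Set V) (x : V) : Set V := ⋂₀ {F | IsFaceOf K F ∧ x ∈ F}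

/-- The relative algebraic interior of `C`: all `x ∈ C` such that for every
`y` in the affine hull of `C` there is `ε > 0` with `x ± ε(y - x) ∈ C`. -/
def riSet (C : Set V) : Set V :=
  {x | x ∈ C ∧ ∀ y ∈ affineSpan ℝ C, ∃ ε : ℝ, 0 < ε ∧
    x + ε • (y - x) ∈ C ∧ x - ε • (y - x) ∈ C}

/-- A generalized affine map on `K` with values in `ℝ ∪ {+∞}` (modelled by
`EReal` values that are never `⊥` on `K`), affine with the extended arithmetic
`0·(+∞) = 0`, `λ·(+∞) = +∞` for `λ > 0`, `α + (+∞) = +∞`. -/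
def IsGenAffine (K : Set V) (f : V → EReal) : Prop :=
  (∀ x ∈ K, f x ≠ ⊥) ∧
  ∀ x ∈ K, ∀ y ∈ K, ∀ l : ℝ, l ∈ Set.Icc (0:ℝ) 1 →
    f ((1 - l) • x + l • y) = ((1 - l : ℝ) : EReal) * f x + ((l : ℝ) : EReal) * f y

/-!
The linear span of the face of a convex set generated by `x` consists of the directions `v` such
that the set contains a segment around `x` in direction `v`; it is the lineality space of the cone
of feasible directions at `x`. Let `C` be the set of points of `K` at which `f` takes values in a
given order-connected set. If `f x = ⊤`, then `f = ⊤` on the relative interior of every segment in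
`K` issuing from `x`, so `C` and `K` have the same directions at `x`. If `f x` is finite, then `f`
is finite on the face of `K` generated by `x`, and this face is the projection of the face of the
graph of `f` generated by `(x, f x)`. A direction `(v, 0)` of the latter keeps the value of `f`
constant, so `v` is a direction of `C`; and having last coordinate `0` costs at most one dimension.
-/

section GeneratedFace

variable {K C F : Set V} {x y v : V}

theorem isFaceOf_genFace (hK : Convex ℝ K) (hx : x ∈ K) : IsFaceOf K (genFace K x) := by
  have isFaceOf_self : IsFaceOf K K := ⟨hK, subset_rfl, fun _ _ _ hy _ hz _ _ _ => ⟨hy, hz⟩⟩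
  refine ⟨convex_sInter fun F hF => hF.1.1, Set.sInter_subset_of_mem ⟨isFaceOf_self, hx⟩, ?_⟩
  intro u hu y hy z hz l hl hul
  have mem_of_face (F) (hF : IsFaceOf K F ∧ x ∈ F) : y ∈ F ∧ z ∈ F :=
    hF.1.2.2 u (hu F hF) y hy z hz l hl hul
  exact ⟨fun F hF => (mem_of_face F hF).1, fun F hF => (mem_of_face F hF).2⟩

theorem genFace_subset (hF : IsFaceOf K F) (hx : x ∈ F) : genFace K x ⊆ F :=
  Set.sInter_subset_of_mem ⟨hF, hx⟩

theorem self_mem_genFace : x ∈ genFace K x := fun _ hF => hF.2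

theorem genFace_mono (hCK : C ⊆ K) (hC : Convex ℝ C) (hx : x ∈ C) :
    genFace C x ⊆ genFace K x := by
  intro y hy F ⟨⟨hF, _, hext⟩, hxF⟩
  refine (hy (F ∩ C) ⟨⟨hF.inter hC, Set.inter_subset_right, ?_⟩, hxF, hx⟩).1
  intro u hu y hy z hz l hl hul
  obtain ⟨hyF, hzF⟩ := hext u hu.1 y (hCK hy) z (hCK hz) l hl hul
  exact ⟨⟨hyF, hy⟩, hzF, hz⟩

/-- The cone of feasible directions of `K` at `x`: for convex `K ∋ x`, these are the `v` such that
`x + c • v ∈ K` for some `c > 0`. Its lineality space is the direction of the face of `K` generated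
by `x`. -/
noncomputable def feasibleCone (K : Set V) (x : V) : PointedCone ℝ V :=
  PointedCone.hull ℝ ((x + ·) ⁻¹' K)

theorem mem_feasibleCone (hK : Convex ℝ K) (hx : x ∈ K) :
    v ∈ feasibleCone K x ↔ ∃ c : ℝ, 0 < c ∧ x + c • v ∈ K := by
  constructor
  · intro hv
    have zero_mem : (0 : V) ∈ ConvexCone.hull ℝ ((x + ·) ⁻¹' K) :=
      ConvexCone.subset_hull (by simpa using hx)
    have hv' : v ∈ (ConvexCone.hull ℝ ((x + ·) ⁻¹' K)).toPointedCone zero_mem :=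
      Submodule.span_le.2 ConvexCone.subset_hull hv
    obtain ⟨c, hc, w, hw, rfl⟩ :=
      (ConvexCone.mem_hull_of_convex (hK.translate_preimage_right x)).1 hv'
    exact ⟨c⁻¹, inv_pos.2 hc, by simpa [smul_smul, inv_mul_cancel₀ hc.ne'] using hw⟩
  · rintro ⟨c, hc, hcv⟩
    simpa [smul_smul, inv_mul_cancel₀ hc.ne'] using
      (feasibleCone K x).smul_mem (inv_nonneg.2 hc.le) (PointedCone.subset_hull hcv)

theorem sub_mem_feasibleCone (hy : y ∈ K) : y - x ∈ feasibleCone K x :=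
  PointedCone.subset_hull (by simpa using hy)

theorem isFaceOf_sub_mem_lineal_feasibleCone (hK : Convex ℝ K) (x : V) :
    IsFaceOf K {y ∈ K | y - x ∈ (feasibleCone K x).lineal} := by
  set D := feasibleCone K x
  have sub_mem_of_combo {y z : V} {l : ℝ} (hy : y ∈ K) (hz : z ∈ K) (hl0 : 0 < l) (hl1 : l < 1)
      (hyz : (1 - l) • y + l • z - x ∈ D.lineal) : y - x ∈ D.lineal := by
    refine ⟨sub_mem_feasibleCone hy, ?_⟩
    have hsum : -((1 - l) • y + l • z - x) + l • (z - x) ∈ D :=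
      D.add_mem hyz.2 (D.smul_mem hl0.le (sub_mem_feasibleCone hz))
    have hscaled : (1 - l) • -(y - x) ∈ D := by
      convert hsum using 1
      module
    have hpos : 0 < 1 - l := sub_pos.2 hl1
    simpa [smul_smul, inv_mul_cancel₀ hpos.ne'] using D.smul_mem (inv_nonneg.2 hpos.le) hscaled
  refine ⟨?_, Set.sep_subset _ _, ?_⟩
  · rintro y ⟨hy, hyD⟩ z ⟨hz, hzD⟩ a b ha hb hab
    refine ⟨hK hy hz ha hb hab, ?_⟩
    convert D.lineal.add_mem (D.lineal.smul_mem a hyD) (D.lineal.smul_mem b hzD) using 1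
    obtain rfl : b = 1 - a := by linarith
    module
  · rintro _ ⟨-, huD⟩ y hy z hz l ⟨hl0, hl1⟩ rfl
    refine ⟨⟨hy, sub_mem_of_combo hy hz hl0 hl1 huD⟩, hz,
      sub_mem_of_combo hz hy (l := 1 - l) (by linarith) (by linarith) ?_⟩
    rwa [sub_sub_cancel, add_comm]

theorem vectorSpan_genFace (hK : Convex ℝ K) (hx : x ∈ K) :
    vectorSpan ℝ (genFace K x) = (feasibleCone K x).lineal := by
  apply le_antisymm
  · rw [vectorSpan_eq_span_vsub_set_right ℝ self_mem_genFace, Submodule.span_le]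
    rintro _ ⟨y, hy, rfl⟩
    exact (genFace_subset (isFaceOf_sub_mem_lineal_feasibleCone hK x) (by simpa using hx) hy).2
  · rintro v ⟨hv, hv'⟩
    obtain ⟨c, hc, hxc⟩ := (mem_feasibleCone hK hx).1 hv
    obtain ⟨d, hd, hxd⟩ := (mem_feasibleCone hK hx).1 hv'
    have hcd : c / (c + d) ∈ Set.Ioo (0 : ℝ) 1 :=
      ⟨by positivity, (div_lt_one (by positivity)).2 (by linarith)⟩
    have hcombo : x = (1 - c / (c + d)) • (x + c • v) + (c / (c + d)) • (x + d • -v) := by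
      match_scalars <;> field_simp <;> ring
    have hmem : x + c • v ∈ genFace K x :=
      ((isFaceOf_genFace hK hx).2.2 x self_mem_genFace _ hxc _ hxd _ hcd hcombo).1
    have hspan : c • v ∈ vectorSpan ℝ (genFace K x) := by
      simpa using vsub_mem_vectorSpan ℝ hmem self_mem_genFace
    exact (Submodule.smul_mem_iff _ hc.ne').1 hspan

end GeneratedFace

namespace IsGenAffine

variable {K : Set V} {f : V → EReal}

theorem quasilinearOn (hf : IsGenAffine K f) (hK : Convex ℝ K) : QuasilinearOn ℝ K f := by
  refine quasilinearOn_iff_mem_uIcc.2 ⟨hK, fun y hy z hz a b ha hb hab => ?_⟩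
  have ha' : (0 : EReal) ≤ a := mod_cast ha
  have hb' : (0 : EReal) ≤ b := mod_cast hb
  have combo_self (t : EReal) : (a : EReal) * t + (b : EReal) * t = t := by
    rw [← EReal.right_distrib_of_nonneg ha' hb', ← EReal.coe_add, hab,
      EReal.coe_one, one_mul]
  have map_combo : f (a • y + b • z) = (a : EReal) * f y + (b : EReal) * f z := by
    obtain rfl : a = 1 - b := by linarith
    exact hf.2 y hy z hz b ⟨hb, by linarith⟩
  rw [map_combo]
  constructor
  · rw [← combo_self (f y ⊓ f z)]
    gcongr
    exacts [inf_le_left, inf_le_right]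
  · rw [← combo_self (f y ⊔ f z)]
    gcongr
    exacts [le_sup_left, le_sup_right]

theorem convex_sep_mem (hf : IsGenAffine K f) (hK : Convex ℝ K) {I : Set EReal}
    (hI : I.OrdConnected) : Convex ℝ {y ∈ K | f y ∈ I} :=
  fun _ hy _ hz _ _ ha hb hab => ⟨hK hy.1 hz.1 ha hb hab, hI.uIcc_subset hy.2 hz.2 <|
    (quasilinearOn_iff_mem_uIcc.1 (hf.quasilinearOn hK)).2 hy.1 hz.1 ha hb hab⟩

theorem map_combo_eq_top (hf : IsGenAffine K f) {y z : V} (hy : y ∈ K) (hz : z ∈ K)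
    (hfy : f y = ⊤) {l : ℝ} (hl0 : 0 ≤ l) (hl1 : l < 1) : f ((1 - l) • y + l • z) = ⊤ := by
  have hne_bot : (l : EReal) * f z ≠ ⊥ := by
    have hl : (0 : EReal) ≤ l := mod_cast hl0
    simp [EReal.mul_ne_bot, hf.1 z hz, hl]
  rw [hf.2 y hy z hz l ⟨hl0, hl1.le⟩, hfy, EReal.coe_mul_top_of_pos (sub_pos.2 hl1),
    EReal.top_add_of_ne_bot hne_bot]

theorem isFaceOf_ne_top (hf : IsGenAffine K f) (hK : Convex ℝ K) :
    IsFaceOf K {y ∈ K | f y ≠ ⊤} := by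
  have hconv : Convex ℝ {y ∈ K | f y ≠ ⊤} := by
    simpa [lt_top_iff_ne_top] using hf.convex_sep_mem hK (Set.ordConnected_Iio (a := ⊤))
  refine ⟨hconv, Set.sep_subset _ _, ?_⟩
  rintro _ ⟨-, hu⟩ y hy z hz l ⟨hl0, hl1⟩ rfl
  refine ⟨⟨hy, fun hfy => hu (hf.map_combo_eq_top hy hz hfy hl0.le hl1)⟩,
    hz, fun hfz => hu ?_⟩
  simpa [add_comm] using
    hf.map_combo_eq_top hz hy hfz (sub_nonneg.2 hl1.le) (sub_lt_self 1 hl0)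

end IsGenAffine

/-- The graph of the finite part of `f` over `K`, as a subset of `V × ℝ`: points of `K` at which
`f` is infinite are left out. -/
def realGraphOn (K : Set V) (f : V → EReal) : Set (V × ℝ) := {p | p.1 ∈ K ∧ f p.1 = p.2}

namespace IsGenAffine

variable {K : Set V} {f : V → EReal} {x : V} {g : ℝ}

theorem convex_realGraphOn (hf : IsGenAffine K f) (hK : Convex ℝ K) :
    Convex ℝ (realGraphOn K f) := by
  rintro ⟨y, r⟩ ⟨hy, hr⟩ ⟨z, s⟩ ⟨hz, hs⟩ a b ha hb hab
  refine ⟨hK hy hz ha hb hab, ?_⟩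
  obtain rfl : a = 1 - b := by linarith
  have hcombo := hf.2 y hy z hz b ⟨hb, by linarith⟩
  dsimp only at hr hs
  rw [hr, hs] at hcombo
  simpa using hcombo

theorem isFaceOf_image_fst (hf : IsGenAffine K f) (hK : Convex ℝ K) {G : Set (V × ℝ)}
    (hG : IsFaceOf (realGraphOn K f) G) : IsFaceOf K (Prod.fst '' G) := by
  obtain ⟨hGconv, hGsub, hGext⟩ := hG
  refine ⟨hGconv.linear_image (LinearMap.fst ℝ V ℝ), ?_, ?_⟩
  · rintro _ ⟨p, hp, rfl⟩
    exact (hGsub hp).1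
  rintro _ ⟨⟨u, t⟩, hu, rfl⟩ y hy z hz l hl huyz
  obtain ⟨huK, hut : f u = t⟩ := hGsub hu
  obtain ⟨⟨-, hfy⟩, -, hfz⟩ :=
    (hf.isFaceOf_ne_top hK).2.2 u ⟨huK, by simp [hut]⟩ y hy z hz l hl huyz
  have hy_coe : f y = (f y).toReal := (EReal.coe_toReal hfy (hf.1 y hy)).symm
  have hz_coe : f z = (f z).toReal := (EReal.coe_toReal hfz (hf.1 z hz)).symm
  have ht : t = (1 - l) * (f y).toReal + l * (f z).toReal := by
    have hcombo := hf.2 y hy z hz l ⟨hl.1.le, hl.2.le⟩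
    rw [← huyz, hut, hy_coe, hz_coe] at hcombo
    exact_mod_cast hcombo
  obtain ⟨hyG, hzG⟩ := hGext (u, t) hu (y, (f y).toReal) ⟨hy, hy_coe⟩ (z, (f z).toReal)
    ⟨hz, hz_coe⟩ l hl (Prod.ext huyz ht)
  exact ⟨⟨_, hyG, rfl⟩, _, hzG, rfl⟩

theorem vectorSpan_genFace_le_map_fst (hf : IsGenAffine K f) (hK : Convex ℝ K) (hx : x ∈ K)
    (hg : f x = g) :
    vectorSpan ℝ (genFace K x) ≤
      (vectorSpan ℝ (genFace (realGraphOn K f) (x, g))).map (LinearMap.fst ℝ V ℝ) := by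
  have hface : IsFaceOf K (Prod.fst '' genFace (realGraphOn K f) (x, g)) :=
    hf.isFaceOf_image_fst hK (isFaceOf_genFace (hf.convex_realGraphOn hK) ⟨hx, hg⟩)
  refine (vectorSpan_mono ℝ (genFace_subset hface ⟨_, self_mem_genFace, rfl⟩)).trans_eq ?_
  exact ((LinearMap.fst ℝ V ℝ).toAffineMap.map_vectorSpan).symm

theorem comap_inl_vectorSpan_genFace_le (hf : IsGenAffine K f) (hK : Convex ℝ K) {I : Set EReal}
    (hI : I.OrdConnected) (hx : x ∈ {y ∈ K | f y ∈ I}) (hg : f x = g) :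
    (vectorSpan ℝ (genFace (realGraphOn K f) (x, g))).comap (LinearMap.inl ℝ V ℝ) ≤
      vectorSpan ℝ (genFace {y ∈ K | f y ∈ I} x) := by
  have hΓ := hf.convex_realGraphOn hK
  have hxΓ : (x, g) ∈ realGraphOn K f := ⟨hx.1, hg⟩
  have hC := hf.convex_sep_mem hK hI
  have mem_of_graph {v : V} (hv : (v, (0 : ℝ)) ∈ feasibleCone (realGraphOn K f) (x, g)) :
      v ∈ feasibleCone {y ∈ K | f y ∈ I} x := by
    obtain ⟨c, hc, hcK, hfc⟩ := (mem_feasibleCone hΓ hxΓ).1 hv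
    have hfc' : f (x + c • v) = f x := by simpa [hg] using hfc
    exact (mem_feasibleCone hC hx).2 ⟨c, hc, hcK, hfc' ▸ hx.2⟩
  rw [vectorSpan_genFace hΓ hxΓ, vectorSpan_genFace hC hx]
  rintro v ⟨hv, hv'⟩
  exact ⟨mem_of_graph hv, mem_of_graph (by simpa using hv')⟩

theorem vectorSpan_genFace_le_of_eq_top (hf : IsGenAffine K f) (hK : Convex ℝ K) {I : Set EReal}
    (hI : I.OrdConnected) (hx : x ∈ {y ∈ K | f y ∈ I}) (htop : f x = ⊤) :
    vectorSpan ℝ (genFace K x) ≤ vectorSpan ℝ (genFace {y ∈ K | f y ∈ I} x) := by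
  have hC := hf.convex_sep_mem hK hI
  have cone_le : feasibleCone K x ≤ feasibleCone {y ∈ K | f y ∈ I} x := by
    intro v hv
    obtain ⟨c, hc, hcK⟩ := (mem_feasibleCone hK hx.1).1 hv
    have hmid : x + (c / 2) • v = (1 - 1 / 2 : ℝ) • x + (1 / 2 : ℝ) • (x + c • v) := by module
    refine (mem_feasibleCone hC hx).2 ⟨c / 2, by positivity, ?_⟩
    rw [hmid]
    refine ⟨hK hx.1 hcK (by norm_num) (by norm_num) (by norm_num), ?_⟩
    rw [hf.map_combo_eq_top hx.1 hcK htop (by norm_num) (by norm_num), ← htop]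
    exact hx.2
  rw [vectorSpan_genFace hK hx.1, vectorSpan_genFace hC hx]
  exact PointedCone.gc_ofSubmodule_lineal.monotone_u cone_le

end IsGenAffine

theorem rank_map_fst_le_rank_comap_inl_add_one {k W : Type*} [DivisionRing k] [AddCommGroup W]
    [Module k W] (P : Submodule k (W × k)) :
    Module.rank k (P.map (LinearMap.fst k W k)) ≤
      Module.rank k (P.comap (LinearMap.inl k W k)) + 1 := by
  by_cases hP : ∃ p ∈ P, p.2 ≠ 0
  · obtain ⟨⟨w, t⟩, hwP, ht⟩ := hP
    have hle : P.map (LinearMap.fst k W k) ≤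
        P.comap (LinearMap.inl k W k) ⊔ Submodule.span k {w} := by
      rintro _ ⟨⟨u, s⟩, huP, rfl⟩
      refine Submodule.mem_sup.2 ⟨u - (s / t) • w, ?_, (s / t) • w,
        Submodule.smul_mem _ _ (Submodule.mem_span_singleton_self w), sub_add_cancel _ _⟩
      simpa [div_mul_cancel₀ s ht] using P.sub_mem huP (P.smul_mem (s / t) hwP)
    calc Module.rank k (P.map (LinearMap.fst k W k))
      _ ≤ _ := Submodule.rank_mono hle
      _ ≤ _ := Submodule.rank_add_le_rank_add_rank _ _
      _ ≤ _ := by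
        gcongr
        simpa using rank_span_le (R := k) {w}
  · push Not at hP
    have hle : P.map (LinearMap.fst k W k) ≤ P.comap (LinearMap.inl k W k) := by
      rintro _ ⟨⟨u, s⟩, huP, rfl⟩
      obtain rfl : s = 0 := hP _ huP
      exact huP
    exact (Submodule.rank_mono hle).trans le_self_add

theorem IsGenAffine.rank_genFace_le_add_one {K : Set V} {f : V → EReal} (hf : IsGenAffine K f)
    (hK : Convex ℝ K) {I : Set EReal} (hI : I.OrdConnected) {x : V}
    (hx : x ∈ {y ∈ K | f y ∈ I}) :
    Module.rank ℝ (vectorSpan ℝ (genFace K x)) ≤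
      Module.rank ℝ (vectorSpan ℝ (genFace {y ∈ K | f y ∈ I} x)) + 1 := by
  by_cases htop : f x = ⊤
  · exact (Submodule.rank_mono (hf.vectorSpan_genFace_le_of_eq_top hK hI hx htop)).trans
      le_self_add
  · have hg : f x = (f x).toReal := (EReal.coe_toReal htop (hf.1 x hx.1)).symm
    calc Module.rank ℝ (vectorSpan ℝ (genFace K x))
      _ ≤ _ := Submodule.rank_mono (hf.vectorSpan_genFace_le_map_fst hK hx.1 hg)
      _ ≤ _ := rank_map_fst_le_rank_comap_inl_add_one _
      _ ≤ _ := by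
        gcongr
        exact Submodule.rank_mono (hf.comap_inl_vectorSpan_genFace_le hK hI hx hg)

theorem stmt11_general (K : Set V) (hK : Convex ℝ K) (f : V → EReal) (hf : IsGenAffine K f)
    (I : Set EReal) (hI : I.OrdConnected) (x : V) (hx : x ∈ {y ∈ K | f y ∈ I}) :
    Module.rank ℝ (vectorSpan ℝ (genFace K x)) =
      Module.rank ℝ (vectorSpan ℝ (genFace {y ∈ K | f y ∈ I} x)) ∨
    Module.rank ℝ (vectorSpan ℝ (genFace K x)) =
      Module.rank ℝ (vectorSpan ℝ (genFace {y ∈ K | f y ∈ I} x)) + 1 := by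
  have hface : genFace {y ∈ K | f y ∈ I} x ⊆ genFace K x :=
    genFace_mono (Set.sep_subset _ _) (hf.convex_sep_mem hK hI) hx
  rcases (Submodule.rank_mono (vectorSpan_mono ℝ hface)).eq_or_lt with heq | hlt
  · exact .inl heq.symm
  · exact .inr <| (hf.rank_genFace_le_add_one hK hI hx).antisymm <|
      Cardinal.add_one_le_of_lt hlt

theorem stmt11 (K : Set V) (hK : Convex ℝ K) (f : V → EReal) (hf : IsGenAffine K f)
    (α : ℝ) (C : Set V)
    (hC : C = {x ∈ K | f x ≤ (α : EReal)} ∨ C = {x ∈ K | f x = (α : EReal)})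
    (x : V) (hx : x ∈ C) (m : ℕ)
    (hm : Module.rank ℝ ↥(vectorSpan ℝ (genFace C x)) = (m : Cardinal)) :
    Module.rank ℝ ↥(vectorSpan ℝ (genFace K x)) = (m : Cardinal) ∨
    Module.rank ℝ ↥(vectorSpan ℝ (genFace K x)) = ((m + 1 : ℕ) : Cardinal) := by
  obtain ⟨I, hI, rfl⟩ : ∃ I : Set EReal, I.OrdConnected ∧ C = {y ∈ K | f y ∈ I} :=
    hC.elim (⟨Set.Iic α, Set.ordConnected_Iic, ·⟩) (⟨{↑α}, Set.ordConnected_singleton, ·⟩)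
  simpa only [hm, Nat.cast_add_one] using stmt11_general K hK f hf I hI x hx
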